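/- The core inverse limit X′ of a tent map satisfies F = E (every folding point is an endpoint) if and only if the critical point c is persistently recurrent. -/

import Mathlib

open Set Filter Topology

/-- The inverse limit `lim←(K, T)`, as the space of backward orbits. -/
abbrev InvLim (T : ℝ → ℝ) (K : Set ℝ) :=
  {x : ℕ → ℝ // (∀ n, x n ∈ K) ∧ ∀ n, T (x (n + 1)) = x n}

/-- A point `x` is an endpoint if for any two subcontinua `A`, `B` containing `x`,
either `A ⊆ B` or `B ⊆ A`. -/
def IsEndpointPt {Z : Type*} [TopologicalSpace Z] (x : Z) : Prop :=
  ∀ A B : Set Z, IsCompact A → IsConnected A → IsCompact B → IsConnected B →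
    x ∈ A → x ∈ B → A ⊆ B ∨ B ⊆ A

/-- The ω-limit set of `c` under `T`. -/
def omegaSet (T : ℝ → ℝ) (c : ℝ) : Set ℝ :=
  {y | ∃ φ : ℕ → ℕ, StrictMono φ ∧
    Filter.Tendsto (fun n => T^[φ n] c) Filter.atTop (nhds y)}

/-- The critical point `c` of `T` is reluctantly recurrent if there is `ε > 0` and
arbitrarily long finite backward orbits `(y L, …, y 1, y 0)` in `ω(c)` along which the
`ε`-neighbourhood of `y 0` has a monotone pull-back: `J 0` is that neighbourhood, each
`J (k+1)` is the largest interval containing `y (k+1)` with `T(J (k+1)) ⊆ J k`, and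
`c ∉ (J k)°` for `1 ≤ k ≤ L`.  Otherwise `c` is persistently recurrent. -/
def ReluctantlyRecurrent (T : ℝ → ℝ) (c : ℝ) : Prop :=
  ∃ ε > (0:ℝ), ∀ L : ℕ, ∃ (y : ℕ → ℝ) (J : ℕ → Set ℝ),
    (∀ i ≤ L, y i ∈ omegaSet T c) ∧ (∀ i < L, T (y (i + 1)) = y i) ∧
    J 0 = Set.Ioo (y 0 - ε) (y 0 + ε) ∧
    (∀ k < L, (J (k + 1)).OrdConnected ∧ y (k + 1) ∈ J (k + 1) ∧
      T '' J (k + 1) ⊆ J k ∧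
      ∀ I : Set ℝ, I.OrdConnected → y (k + 1) ∈ I → T '' I ⊆ J k → I ⊆ J (k + 1)) ∧
    (∀ k, 1 ≤ k → k ≤ L → c ∉ interior (J k))


section helpers

variable {s : ℝ} {T : ℝ → ℝ}

lemma tent_left (hs0 : 0 < s) (hT : ∀ x, T x = min (s * x) (s * (1 - x))) {x : ℝ}
    (hx : x ≤ 1/2) : T x = s * x := by
  rw [hT, min_eq_left]
  exact mul_le_mul_of_nonneg_left (by linarith) hs0.le

lemma tent_right (hs0 : 0 < s) (hT : ∀ x, T x = min (s * x) (s * (1 - x))) {x : ℝ}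
    (hx : 1/2 ≤ x) : T x = s * (1 - x) := by
  rw [hT, min_eq_right]
  exact mul_le_mul_of_nonneg_left (by linarith) hs0.le

lemma tent_le (hs0 : 0 < s) (hT : ∀ x, T x = min (s * x) (s * (1 - x))) (x : ℝ) :
    T x ≤ s / 2 := by
  rcases le_total x (1/2) with h | h
  · rw [tent_left hs0 hT h]; nlinarith
  · rw [tent_right hs0 hT h]; nlinarith

lemma tent_cont (hT : ∀ x, T x = min (s * x) (s * (1 - x))) : Continuous T := by
  have : T = fun x => min (s * x) (s * (1 - x)) := funext hT
  rw [this]; fun_prop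

lemma tent_lip (hs0 : 0 < s) (hT : ∀ x, T x = min (s * x) (s * (1 - x))) (x y : ℝ) :
    |T x - T y| ≤ s * |x - y| := by
  rw [hT, hT]
  refine (abs_min_sub_min_le_max _ _ _ _).trans (max_le ?_ ?_)
  · rw [← mul_sub, abs_mul, abs_of_pos hs0]
  · rw [← mul_sub, abs_mul, abs_of_pos hs0, ← abs_neg]
    apply le_of_eq; congr 2; ring

lemma tent_lip_iter (hs0 : 0 < s) (hT : ∀ x, T x = min (s * x) (s * (1 - x))) (k : ℕ)
    (x y : ℝ) : |T^[k] x - T^[k] y| ≤ s ^ k * |x - y| := by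
  induction k with
  | zero => simp
  | succ k ih =>
    rw [Function.iterate_succ_apply', Function.iterate_succ_apply']
    refine (tent_lip hs0 hT _ _).trans ?_
    rw [pow_succ', mul_assoc]
    exact mul_le_mul_of_nonneg_left ih hs0.le

lemma tent_maps (hs1 : 1 < s) (hs2 : s < 2) (hT : ∀ x, T x = min (s * x) (s * (1 - x))) {x : ℝ}
    (hx : x ∈ Icc (s * (1 - s / 2)) (s / 2)) : T x ∈ Icc (s * (1 - s / 2)) (s / 2) := by
  have hs0 : 0 < s := by linarith
  refine ⟨?_, tent_le hs0 hT x⟩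
  rcases le_total x (1/2) with h | h
  · rw [tent_left hs0 hT h]
    have : 0 < s * (1 - s/2) := mul_pos hs0 (by linarith)
    nlinarith [hx.1]
  · rw [tent_right hs0 hT h]
    exact mul_le_mul_of_nonneg_left (by linarith [hx.2]) hs0.le

lemma tent_maps_iter (hs1 : 1 < s) (hs2 : s < 2) (hT : ∀ x, T x = min (s * x) (s * (1 - x)))
    (n : ℕ) {x : ℝ} (hx : x ∈ Icc (s * (1 - s / 2)) (s / 2)) :
    T^[n] x ∈ Icc (s * (1 - s / 2)) (s / 2) := by
  induction n with
  | zero => simpa using hx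
  | succ n ih => rw [Function.iterate_succ_apply']; exact tent_maps hs1 hs2 hT ih

lemma invlim_iter {K : Set ℝ} (x : InvLim T K) (n k : ℕ) : T^[k] (x.1 (n + k)) = x.1 n := by
  induction k with
  | zero => simp
  | succ k ih =>
    rw [Function.iterate_succ_apply, ← add_assoc, x.2.2, ih]

lemma orbit_core (hs1 : 1 < s) (hs2 : s < 2)
    (hT : ∀ x, T x = min (s * x) (s * (1 - x))) (z x : ℕ → ℝ) (C : ℝ)
    (hz : ∀ k, T (z (k + 1)) = z k)
    (hx : ∀ k, x k ∈ Icc (s * (1 - s / 2)) (s / 2))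
    (hzx : ∀ k, |z k - x k| ≤ C / s ^ k) (m : ℕ) :
    z m ∈ Icc (s * (1 - s / 2)) (s / 2) := by
  have hs0 : 0 < s := by linarith
  have hle : ∀ k, z k ≤ s / 2 := fun k => by rw [← hz k]; exact tent_le hs0 hT _
  refine ⟨?_, hle m⟩
  by_contra hlt
  push Not at hlt
  have hpos : 0 < s * (1 - s/2) := mul_pos hs0 (by linarith)
  have hstep : ∀ k, z k < s * (1 - s / 2) → z k = s * z (k + 1) := by
    intro k hk
    rcases le_total (z (k+1)) (1/2) with h | h
    · rw [← hz k, tent_left hs0 hT h]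
    · exfalso
      rw [← hz k, tent_right hs0 hT h] at hk
      have := hle (k+1)
      nlinarith
  have hall : ∀ j, z (m + j) < s * (1 - s / 2) ∧ z (m + j) = z m / s ^ j := by
    intro j
    induction j with
    | zero => simpa using hlt
    | succ j ih =>
      have h1 := hstep _ ih.1
      have h2 : z (m + (j + 1)) = z (m + j) / s := by
        rw [h1]; field_simp; rfl
      refine ⟨?_, ?_⟩
      · rw [h2, div_lt_iff₀ hs0]; nlinarith [ih.1]
      · rw [h2, ih.2, pow_succ, div_div]
  have hinv : Tendsto (fun j : ℕ => (s ^ j)⁻¹) atTop (𝓝 0) :=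
    (tendsto_pow_atTop_atTop_of_one_lt hs1).inv_tendsto_atTop
  have h1 : Tendsto (fun j => z m * (s ^ j)⁻¹ + C * (s ^ (j + m))⁻¹) atTop (𝓝 0) := by
    have := (hinv.const_mul (z m)).add (((tendsto_add_atTop_iff_nat m).2 hinv).const_mul C)
    simpa using this
  have h2 : ∀ j, s * (1 - s / 2) ≤ z m * (s ^ j)⁻¹ + C * (s ^ (j + m))⁻¹ := by
    intro j
    have ha := (abs_le.1 (hzx (m + j))).1
    have hb := (hx (m + j)).1
    have hc := (hall j).2
    rw [div_eq_mul_inv] at ha hc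
    rw [add_comm j m]
    linarith
  have := ge_of_tendsto' h1 h2
  linarith

/-- sign sequence -/
noncomputable def sgnSeq (x : ℕ → ℝ) : ℕ → ℝ
  | 0 => 1
  | k + 1 => sgnSeq x k * (if x (k + 1) < 1/2 then 1 else -1)

lemma sgnSeq_abs (x : ℕ → ℝ) (k : ℕ) : |sgnSeq x k| = 1 := by
  induction k with
  | zero => simp [sgnSeq]
  | succ k ih => rw [sgnSeq, abs_mul, ih]; split_ifs <;> simp

lemma branch_step (hs0 : 0 < s) (hT : ∀ x, T x = min (s * x) (s * (1 - x))) (x : ℕ → ℝ)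
    (hx : ∀ k, T (x (k + 1)) = x k) (ε t : ℝ) (ht : |t| ≤ ε)
    (h : ∀ k, 1 ≤ k → ε / s ^ k ≤ |x k - 1/2|) (k : ℕ) :
    T (x (k + 1) + sgnSeq x (k + 1) * (t / s ^ (k + 1))) = x k + sgnSeq x k * (t / s ^ k) := by
  have h1 := h (k + 1) (by omega)
  have hp : 0 < s ^ (k + 1) := by positivity
  have h2 : |sgnSeq x (k + 1) * (t / s ^ (k + 1))| ≤ ε / s ^ (k + 1) := by
    rw [abs_mul, sgnSeq_abs, one_mul, abs_div, abs_of_pos hp]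
    gcongr
  have h3 := abs_le.1 h2
  have h4 : s * (t / s ^ (k + 1)) = t / s ^ k := by
    rw [pow_succ]; field_simp
  rw [← hx k]
  by_cases hlt : x (k + 1) < 1/2
  · rw [abs_of_neg (by linarith)] at h1
    rw [tent_left hs0 hT (by linarith), tent_left hs0 hT hlt.le]
    simp only [sgnSeq, if_pos hlt]
    rw [← h4]; ring
  · push Not at hlt
    rw [abs_of_nonneg (by linarith)] at h1
    rw [tent_right hs0 hT (by linarith), tent_right hs0 hT hlt]
    simp only [sgnSeq, if_neg (not_lt.2 hlt)]
    rw [← h4]; ring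

lemma not_endpoint (hs1 : 1 < s) (hs2 : s < 2)
    (hT : ∀ x, T x = min (s * x) (s * (1 - x)))
    (x : InvLim T (Icc (s * (1 - s / 2)) (s / 2))) (n : ℕ) (ε : ℝ) (hε : 0 < ε)
    (h : ∀ k, 1 ≤ k → ε / s ^ k ≤ |x.1 (n + k) - 1/2|) : ¬ IsEndpointPt x := by
  have hs0 : 0 < s := by linarith
  intro hend
  set y : ℕ → ℝ := fun k => x.1 (n + k) with hy
  have hyT : ∀ k, T (y (k + 1)) = y k := fun k => x.2.2 (n + k)
  set cl : ℝ → ℝ := fun t => max (-ε) (min t ε) with hcl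
  have hclc : Continuous cl := by fun_prop
  have hcla : ∀ t, |cl t| ≤ ε := fun t =>
    abs_le.2 ⟨le_max_left _ _, max_le (by linarith) (min_le_right _ _)⟩
  have hclid : ∀ t, -ε ≤ t → t ≤ ε → cl t = t := fun t h1 h2 => by
    simp only [hcl]; rw [min_eq_left h2, max_eq_right h1]
  let z : ℝ → ℕ → ℝ := fun t k => y k + sgnSeq y k * (cl t / s ^ k)
  have hz : ∀ t k, T (z t (k + 1)) = z t k := fun t k =>
    branch_step hs0 hT y hyT ε (cl t) (hcla t) h k
  have hzK : ∀ t k, z t k ∈ Icc (s * (1 - s / 2)) (s / 2) := fun t k => by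
    refine orbit_core hs1 hs2 hT (z t) y ε (hz t) (fun k => x.2.1 _) ?_ k
    intro k
    have hp : 0 < s ^ k := by positivity
    simp only [z, add_sub_cancel_left]
    rw [abs_mul, sgnSeq_abs, one_mul, abs_div, abs_of_pos hp]
    have := hcla t
    gcongr
  let G : ℝ → InvLim T (Icc (s * (1 - s / 2)) (s / 2)) := fun t =>
    ⟨fun m => T^[n] (z t m), fun m => tent_maps_iter hs1 hs2 hT n (hzK t m), fun m => by
      rw [← Function.iterate_succ_apply' T, Function.iterate_succ_apply, hz]⟩
  have hGc : Continuous G := by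
    refine Continuous.subtype_mk (continuous_pi fun m => ?_) _
    refine ((tent_cont hT).iterate n).comp ?_
    simp only [z]
    fun_prop
  have hziter : ∀ t j, T^[j] (z t j) = z t 0 := by
    intro t j
    induction j with
    | zero => rfl
    | succ j ih => rw [Function.iterate_succ_apply, hz, ih]
  have hGn : ∀ t, -ε ≤ t → t ≤ ε → (G t).1 n = x.1 n + t := by
    intro t h1 h2
    change T^[n] (z t n) = _
    rw [hziter]
    simp [z, y, sgnSeq, hclid t h1 h2]
  have hG0 : G 0 = x := by
    apply Subtype.ext
    funext m
    change T^[n] (z 0 m) = _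
    have : z 0 m = x.1 (m + n) := by
      simp [z, y, hclid 0 (by linarith) hε.le, add_comm]
    rw [this, invlim_iter]
  have := hend (G '' Icc (-ε) 0) (G '' Icc 0 ε) (isCompact_Icc.image hGc)
    ((isConnected_Icc (by linarith)).image _ hGc.continuousOn) (isCompact_Icc.image hGc)
    ((isConnected_Icc hε.le).image _ hGc.continuousOn)
    ⟨0, ⟨by linarith, le_refl _⟩, hG0⟩ ⟨0, ⟨le_refl _, hε.le⟩, hG0⟩
  rcases this with h1 | h1
  · obtain ⟨t, ht, he⟩ := h1 ⟨-ε, ⟨le_refl _, by linarith⟩, rfl⟩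
    have e : (G t).1 n = (G _).1 n := congrArg (fun w => w.1 n) he
    rw [hGn t (by linarith [ht.1]) ht.2, hGn (-ε) le_rfl (by linarith)] at e
    linarith [ht.1]
  · obtain ⟨t, ht, he⟩ := h1 ⟨ε, ⟨hε.le, le_refl _⟩, rfl⟩
    have e : (G t).1 n = (G _).1 n := congrArg (fun w => w.1 n) he
    rw [hGn t ht.1 (by linarith [ht.2]), hGn ε (by linarith) le_rfl] at e
    linarith [ht.2]

/-- a point outside a closed set is eventually separated coordinatewise -/
lemma coord_sep {K : Set ℝ} (B : Set (InvLim T K)) (hB : IsClosed B) (a : InvLim T K)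
    (ha : a ∉ B) : ∃ N, ∀ k ≥ N, ∀ b ∈ B, b.1 k ≠ a.1 k := by
  by_contra hcon
  push Not at hcon
  choose k hk b hb hbk using hcon
  apply ha
  have ht : Tendsto b atTop (𝓝 a) := by
    rw [tendsto_subtype_rng, tendsto_pi_nhds]
    intro i
    apply tendsto_const_nhds.congr'
    filter_upwards [eventually_ge_atTop i] with N hN
    have hi : i ≤ k N := hN.trans (hk N)
    obtain ⟨d, hd⟩ := Nat.exists_eq_add_of_le hi
    rw [← invlim_iter a i d, ← invlim_iter (b N) i d, ← hd, hbk N]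
  exact hB.mem_of_tendsto ht (Eventually.of_forall hb)

lemma not_endpoint_conv (hs1 : 1 < s)
    (hT : ∀ x, T x = min (s * x) (s * (1 - x))) {K : Set ℝ}
    (x : InvLim T K) (hx : ¬ IsEndpointPt x) :
    ∃ n : ℕ, ∃ ε > (0:ℝ), ∀ k, 1 ≤ k → ε / s ^ k ≤ |x.1 (n + k) - 1/2| := by
  have hs0 : 0 < s := by linarith
  unfold IsEndpointPt at hx
  push Not at hx
  obtain ⟨A, B, hAc, hA, hBc, hB, hxA, hxB, hAB, hBA⟩ := hx
  obtain ⟨a, haA, haB⟩ := not_subset.1 hAB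
  obtain ⟨b, hbB, hbA⟩ := not_subset.1 hBA
  obtain ⟨N1, h1⟩ := coord_sep B hBc.isClosed a haB
  obtain ⟨N2, h2⟩ := coord_sep A hAc.isClosed b hbA
  set n := max N1 N2 with hn
  have hpc : ∀ (C : Set (InvLim T K)) (_ : IsConnected C) (m : ℕ),
      ((fun w : InvLim T K => w.1 m) '' C).OrdConnected := fun C hC m =>
    (hC.isPreconnected.image _
      ((continuous_apply m).comp continuous_subtype_val).continuousOn).ordConnected
  have hax : 0 < |a.1 n - x.1 n| :=
    abs_pos.2 (sub_ne_zero.2 (h1 n (le_max_left _ _) x hxB).symm)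
  have hbx : 0 < |b.1 n - x.1 n| :=
    abs_pos.2 (sub_ne_zero.2 (h2 n (le_max_right _ _) x hxA).symm)
  refine ⟨n, min |a.1 n - x.1 n| |b.1 n - x.1 n|, lt_min hax hbx, ?_⟩
  set ε := min |a.1 n - x.1 n| |b.1 n - x.1 n|
  intro k hk
  obtain ⟨j, rfl⟩ : ∃ j, k = j + 1 := ⟨k - 1, by omega⟩
  by_contra hlt
  push Not at hlt
  have hpj : 0 < s ^ j := by positivity
  have hfar : ∀ w : InvLim T K, ε ≤ |w.1 n - x.1 n| → w.1 (n + j) ≤ x.1 (n + j) := by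
    intro w hw
    have e1 : ε ≤ s ^ j * |w.1 (n + j) - x.1 (n + j)| := by
      refine hw.trans ?_
      rw [← invlim_iter w n j, ← invlim_iter x n j]
      exact tent_lip_iter hs0 hT j _ _
    have e2 : s / 2 - x.1 (n + j) ≤ s * |x.1 (n + (j + 1)) - 1/2| := by
      have := tent_lip hs0 hT (1/2) (x.1 (n + (j + 1)))
      rw [tent_left hs0 hT le_rfl, abs_sub_comm (1/2 : ℝ)] at this
      have e3 : T (x.1 (n + (j + 1))) = x.1 (n + j) := x.2.2 (n + j)
      rw [e3] at this
      have := le_abs_self (s * (1/2) - x.1 (n + j))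
      linarith
    have e4 : w.1 (n + j) ≤ s / 2 := by
      rw [← w.2.2 (n + j)]; exact tent_le hs0 hT _
    by_contra hgt
    push Not at hgt
    rw [abs_of_pos (by linarith)] at e1
    rw [lt_div_iff₀ (by positivity), pow_succ] at hlt
    nlinarith
  have ha' := hfar a (min_le_left _ _)
  have hb' := hfar b (min_le_right _ _)
  rcases le_total (a.1 (n + j)) (b.1 (n + j)) with h | h
  · obtain ⟨w, hw, he⟩ := (hpc A hA (n + j)).out ⟨a, haA, rfl⟩ ⟨x, hxA, rfl⟩ ⟨h, hb'⟩
    exact h2 (n + j) (by omega) w hw he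
  · obtain ⟨w, hw, he⟩ := (hpc B hB (n + j)).out ⟨b, hbB, rfl⟩ ⟨x, hxB, rfl⟩ ⟨h, ha'⟩
    exact h1 (n + j) (by omega) w hw he

lemma omega_eq (T : ℝ → ℝ) (c : ℝ) :
    omegaSet T c = {y | MapClusterPt y atTop (fun n => T^[n] c)} := by
  ext y
  constructor
  · rintro ⟨φ, hφ, h⟩
    exact MapClusterPt.of_comp hφ.tendsto_atTop h.mapClusterPt
  · intro h
    exact MapClusterPt.tendsto_subseq h

lemma omega_closed (T : ℝ → ℝ) (c : ℝ) : IsClosed (omegaSet T c) := by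
  rw [omega_eq]; exact isClosed_setOfPred_clusterPt

lemma omega_core (hs1 : 1 < s) (hs2 : s < 2) (hT : ∀ x, T x = min (s * x) (s * (1 - x))) :
    omegaSet T (1/2) ⊆ Icc (s * (1 - s / 2)) (s / 2) := by
  have hs0 : 0 < s := by linarith
  rintro y ⟨φ, hφ, h⟩
  refine isClosed_Icc.mem_of_tendsto h ?_
  filter_upwards [hφ.tendsto_atTop.eventually_ge_atTop 1] with n hn
  obtain ⟨j, hj⟩ : ∃ j, φ n = j + 1 := ⟨φ n - 1, by omega⟩
  rw [hj, Function.iterate_succ_apply]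
  apply tent_maps_iter hs1 hs2 hT
  rw [tent_left hs0 hT le_rfl]
  constructor <;> nlinarith

lemma orbit_mem_omega (hT : ∀ x, T x = min (s * x) (s * (1 - x))) {c : ℝ}
    (hrec : c ∈ omegaSet T c) (k : ℕ) : T^[k] c ∈ omegaSet T c := by
  obtain ⟨φ, hφ, h⟩ := hrec
  refine ⟨fun n => k + φ n, fun a b hab => Nat.add_lt_add_left (hφ hab) k, ?_⟩
  have := (((tent_cont hT).iterate k).tendsto c).comp h
  refine this.congr fun n => ?_
  simp only [Function.comp]
  rw [Function.iterate_add_apply]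

/-- Reluctant recurrence from an explicit long backward orbit avoiding `c`. -/
lemma reluctant_of (hs1 : 1 < s) (hT : ∀ x, T x = min (s * x) (s * (1 - x)))
    (y : ℕ → ℝ) (hy : ∀ i, y i ∈ omegaSet T (1/2)) (hyT : ∀ i, T (y (i + 1)) = y i)
    (ε : ℝ) (hε : 0 < ε) (h : ∀ k, 1 ≤ k → ε / s ^ k ≤ |y k - 1/2|) :
    ReluctantlyRecurrent T (1/2) := by
  have hs0 : 0 < s := by linarith
  have hsame : ∀ u v : ℝ, (u ≤ 1/2 ∧ v ≤ 1/2) ∨ (1/2 ≤ u ∧ 1/2 ≤ v) →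
      |T u - T v| = s * |u - v| := by
    rintro u v (⟨h1, h2⟩ | ⟨h1, h2⟩)
    · rw [tent_left hs0 hT h1, tent_left hs0 hT h2, ← mul_sub, abs_mul, abs_of_pos hs0]
    · rw [tent_right hs0 hT h1, tent_right hs0 hT h2, ← mul_sub, abs_mul, abs_of_pos hs0,
        ← abs_neg (u - v)]
      congr 2; ring
  have hmem : ∀ (z w r : ℝ), z ∈ Ioo (w - r) (w + r) ↔ |z - w| < r := by
    intro z w r
    rw [abs_lt, mem_Ioo]
    constructor <;> rintro ⟨h1, h2⟩ <;> constructor <;> linarith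
  refine ⟨ε, hε, fun L => ⟨y, fun k => Ioo (y k - ε / s ^ k) (y k + ε / s ^ k),
    fun i _ => hy i, fun i _ => hyT i, by simp, fun k _ => ⟨ordConnected_Ioo, ?_, ?_, ?_⟩, ?_⟩⟩
  · rw [hmem]; simp; positivity
  · rintro _ ⟨z, hz, rfl⟩
    rw [hmem] at hz ⊢
    rw [← hyT k]
    refine (tent_lip hs0 hT _ _).trans_lt ?_
    rw [lt_div_iff₀ (by positivity), pow_succ] at hz
    rw [lt_div_iff₀ (by positivity)]
    linarith
  · intro I hI hyI hIJ z hz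
    have key : ∀ u ∈ I, (u ≤ 1/2 ∧ y (k+1) ≤ 1/2) ∨ (1/2 ≤ u ∧ 1/2 ≤ y (k+1)) →
        |u - y (k + 1)| < ε / s ^ (k + 1) := by
      intro u hu hside
      have := hIJ ⟨u, hu, rfl⟩
      rw [hmem, ← hyT k, hsame _ _ hside, lt_div_iff₀ (by positivity)] at this
      rw [lt_div_iff₀ (by positivity), pow_succ]
      linarith
    have hc : (1/2 : ℝ) ∉ I := by
      intro hcI
      have h1 := key _ hcI ((le_total (y (k+1)) (1/2)).imp (fun h => ⟨le_rfl, h⟩) (fun h => ⟨le_rfl, h⟩))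
      have h2 := h (k + 1) (by omega)
      rw [abs_sub_comm] at h2
      linarith
    rw [hmem]
    apply key z hz
    by_contra hcon
    apply hc
    push Not at hcon
    rcases le_total z (1/2) with h1 | h1 <;> rcases le_total (y (k+1)) (1/2) with h2 | h2
    · exact absurd h2 (not_le.2 (hcon.1 h1))
    · exact hI.out hz hyI ⟨h1, h2⟩
    · exact hI.out hyI hz ⟨h2, h1⟩
    · exact absurd h2 (not_le.2 (hcon.2 h1))
  · intro k hk _ hcI
    have h1 := interior_subset hcI
    rw [hmem, abs_sub_comm] at h1
    exact absurd (h k hk) (not_le.2 h1)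

lemma reluctant_finite (hs1 : 1 < s) (hT : ∀ x, T x = min (s * x) (s * (1 - x)))
    (h : ReluctantlyRecurrent T (1/2)) :
    ∃ ε > (0:ℝ), ∀ L : ℕ, ∃ y : ℕ → ℝ, (∀ i ≤ L, y i ∈ omegaSet T (1/2)) ∧
      (∀ i < L, T (y (i + 1)) = y i) ∧ ∀ k, 1 ≤ k → k ≤ L → ε / s ^ k ≤ |y k - 1/2| := by
  have hs0 : 0 < s := by linarith
  obtain ⟨ε, hε, h⟩ := h
  refine ⟨ε, hε, fun L => ?_⟩
  obtain ⟨y, J, hy, hyT, hJ0, hJ, hc⟩ := h L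
  refine ⟨y, hy, hyT, ?_⟩
  have hmem : ∀ (z w r : ℝ), z ∈ Ioo (w - r) (w + r) ↔ |z - w| < r := by
    intro z w r
    rw [abs_lt, mem_Ioo]
    constructor <;> rintro ⟨h1, h2⟩ <;> constructor <;> linarith
  have hsub : ∀ k ≤ L, Ioo (y k - ε / s ^ k) (y k + ε / s ^ k) ⊆ J k := by
    intro k
    induction k with
    | zero => intro _; rw [hJ0]; simp
    | succ k ih =>
      intro hk
      refine (hJ k (by omega)).2.2.2 _ ordConnected_Ioo ?_ ?_
      · rw [hmem]; simp; positivity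
      · rintro _ ⟨z, hz, rfl⟩
        apply ih (by omega)
        rw [hmem] at hz ⊢
        rw [← hyT k (by omega)]
        refine (tent_lip hs0 hT _ _).trans_lt ?_
        rw [lt_div_iff₀ (by positivity), pow_succ] at hz
        rw [lt_div_iff₀ (by positivity)]
        linarith
  intro k hk hkL
  by_contra hlt
  push Not at hlt
  apply hc k hk hkL
  apply interior_maximal (hsub k hkL) isOpen_Ioo
  rw [hmem, abs_sub_comm]
  exact hlt

lemma reluctant_infinite (hs1 : 1 < s) (hs2 : s < 2)
    (hT : ∀ x, T x = min (s * x) (s * (1 - x)))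
    (hrec : (1/2 : ℝ) ∈ omegaSet T (1/2))
    (h : ReluctantlyRecurrent T (1/2)) :
    ∃ ε > (0:ℝ), ∃ y : ℕ → ℝ, (∀ i, y i ∈ omegaSet T (1/2)) ∧
      (∀ i, T (y (i + 1)) = y i) ∧ ∀ k, 1 ≤ k → ε / s ^ k ≤ |y k - 1/2| := by
  obtain ⟨ε, hε, h⟩ := reluctant_finite hs1 hT h
  choose y hy hyT hyc using h
  have hcomp : IsCompact (omegaSet T (1/2)) :=
    isCompact_Icc.of_isClosed_subset (omega_closed _ _) (omega_core hs1 hs2 hT)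
  let w : ℕ → ℕ → ℝ := fun L i => if i ≤ L then y L i else 1/2
  have hw : ∀ L, w L ∈ Set.pi univ (fun _ : ℕ => omegaSet T (1/2)) := by
    intro L i _
    simp only [w]
    split_ifs with hi
    · exact hy L i hi
    · exact hrec
  obtain ⟨x, hx, φ, hφ, hlim⟩ := (isCompact_univ_pi fun _ => hcomp).tendsto_subseq hw
  have hlim' : ∀ i, Tendsto (fun L => y (φ L) i) atTop (𝓝 (x i)) := by
    intro i
    refine ((tendsto_pi_nhds.1 hlim) i).congr' ?_
    filter_upwards [hφ.tendsto_atTop.eventually_ge_atTop i] with L hL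
    simp only [Function.comp, w, if_pos hL]
  refine ⟨ε, hε, x, fun i => hx i (mem_univ _), fun i => ?_, fun k hk => ?_⟩
  · refine tendsto_nhds_unique
      ((((tent_cont hT).tendsto _).comp (hlim' (i + 1))).congr' ?_) (hlim' i)
    filter_upwards [hφ.tendsto_atTop.eventually_gt_atTop i] with L hL
    exact hyT _ i hL
  · refine ge_of_tendsto (((hlim' k).sub_const (1/2)).abs) ?_
    filter_upwards [hφ.tendsto_atTop.eventually_ge_atTop k] with L hL
    exact hyc _ k hk hL

lemma endpoint_folding (hs1 : 1 < s) (hs2 : s < 2)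
    (hT : ∀ x, T x = min (s * x) (s * (1 - x)))
    (hrec : (1/2 : ℝ) ∈ omegaSet T (1/2))
    (x : InvLim T (Icc (s * (1 - s / 2)) (s / 2))) (hx : IsEndpointPt x) (n : ℕ) :
    x.1 n ∈ omegaSet T (1/2) := by
  have hs0 : 0 < s := by linarith
  by_contra hn
  obtain ⟨δ, hδ, hball⟩ := Metric.isOpen_iff.1 (omega_closed T (1/2)).isOpen_compl _ hn
  refine not_endpoint hs1 hs2 hT x n δ hδ (fun k _ => ?_) hx
  by_contra hlt
  push Not at hlt
  refine hball (a := T^[k] (1/2)) ?_ (orbit_mem_omega hT hrec k)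
  rw [Metric.mem_ball, Real.dist_eq, ← invlim_iter x n k, abs_sub_comm]
  refine (tent_lip_iter hs0 hT k _ _).trans_lt ?_
  rw [lt_div_iff₀ (by positivity)] at hlt
  linarith

end helpers

/-- For the core inverse limit `X′` of a tent map with recurrent
critical point of infinite orbit, `F = E` (every folding point is an endpoint) if and
only if `c` is persistently recurrent. -/
theorem stmt14 (s : ℝ) (hs : s ∈ Set.Ioc (Real.sqrt 2) 2) (T : ℝ → ℝ)
    (hT : ∀ x, T x = min (s * x) (s * (1 - x))) (c : ℝ) (hc : c = 1/2)
    (hinf : Function.Injective fun n : ℕ => T^[n] c)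
    (hrec : c ∈ omegaSet T c)
    (K : Set ℝ) (hK : K = Set.Icc (T^[2] c) (T c))
    (E F : Set (InvLim T K))
    (hE : E = {x : InvLim T K | IsEndpointPt x})
    (hF : F = {x : InvLim T K | ∀ n, x.1 n ∈ omegaSet T c}) :
    F = E ↔ ¬ ReluctantlyRecurrent T c := by
  subst hc
  have hs1 : 1 < s := by
    refine lt_trans ?_ hs.1
    rw [Real.lt_sqrt (by norm_num)]; norm_num
  have hs0 : 0 < s := by linarith
  have hs2 : s < 2 := by
    refine lt_of_le_of_ne hs.2 ?_
    rintro rfl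
    have h01 : T (1/2) = 1 := by rw [hT]; norm_num
    have h10 : T 1 = 0 := by rw [hT]; norm_num
    have h00 : T 0 = 0 := by rw [hT]; norm_num
    have : (2 : ℕ) = 3 := hinf (by
      simp only [Function.iterate_succ_apply, Function.iterate_zero, id, h01, h10, h00])
    omega
  have hc1 : T (1/2) = s / 2 := by rw [tent_left hs0 hT le_rfl]; ring
  have hc2 : T^[2] (1/2) = s * (1 - s / 2) := by
    simp only [Function.iterate_succ_apply, Function.iterate_zero, id]
    rw [hc1, tent_right hs0 hT (by linarith)]
  rw [hc1, hc2] at hK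
  subst hK
  subst hE hF
  constructor
  · intro hFE hR
    obtain ⟨ε, hε, y, hy, hyT, hyc⟩ := reluctant_infinite hs1 hs2 hT hrec hR
    let x : InvLim T (Icc (s * (1 - s / 2)) (s / 2)) :=
      ⟨y, fun i => omega_core hs1 hs2 hT (hy i), hyT⟩
    have hxF : x ∈ {x : InvLim T (Icc (s * (1 - s / 2)) (s / 2)) |
        ∀ n, x.1 n ∈ omegaSet T (1/2)} := hy
    rw [hFE] at hxF
    refine not_endpoint hs1 hs2 hT x 0 ε hε (fun k hk => ?_) hxF
    rw [zero_add]
    exact hyc k hk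
  · intro hR
    ext x
    refine ⟨fun hx => ?_, fun hx n => endpoint_folding hs1 hs2 hT hrec x hx n⟩
    by_contra hne
    obtain ⟨n, ε, hε, h⟩ := not_endpoint_conv hs1 hT x hne
    exact hR (reluctant_of hs1 hT (fun k => x.1 (n + k)) (fun k => hx _)
      (fun k => x.2.2 (n + k)) ε hε h)
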